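/- For any sequence (ε_k) of positive reals tending to 0, there exist a sequence (n_k) of positive integers satisfying n_{k+1}/n_k ≥ 1 + ε_k for all k ≥ k₀ and a permutation σ of the positive integers such that limsup_{N→∞} ( Σ_{k=1}^N cos(2π n_{σ(k)} x) ) / √(2N log log N) = +∞ for Lebesgue-almost every x ∈ (0,1). -/

import Mathlib

/-!
A block of `r` frequencies `m (r + j)` with `j < r` has all its cosines at least `1 / 2` on the peak
set `{x | Int.fract (m x) < 1 / (16 r)}`, of measure `1 / (16 r)`. Suppose `N` terms with
frequencies much smaller than `m` precede the block. The indicator of the peak set has period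
`1 / m`, so these terms remain orthogonal on it, and their sum is typically of order `√N` there; it
is negligible if `N / r ^ 2 → 0`. Peak sets of blocks at widely separated scales are independent,
because they depend on disjoint sets of binary digits of `x`. Taking `r` about `u log u` for the
`u`-th block, the sum of the measures diverges although `N / r ^ 2` is about `1 / log u`, and a
second Borel–Cantelli argument shows that almost every `x` lies in infinitely many of the peak sets
where the partial sum is at least `r / 4`. This is far above `√(2 N log log N)`.

The gap condition is easy to meet because the `r` frequencies of a block lie in one octave and have
relative spacing at least `1 / (2 r)`: it is enough that they have large indices in the increasing
enumeration, which many smaller frequencies ensure. The permutation places most of these smaller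
frequencies after the block, so that they are not counted in `N`.
-/

open MeasureTheory Filter Real Topology

noncomputable section

section BorelCantelli

open ProbabilityTheory

variable {Ω ι : Type*} [MeasurableSpace Ω] {μ : Measure Ω}

lemma indepFun_indicator_one_of_indepSet {A B : Set Ω} (h : IndepSet A B μ) :
    IndepFun (A.indicator (1 : Ω → ℝ)) (B.indicator (1 : Ω → ℝ)) μ := by
  have comap_le (C : Set Ω) : MeasurableSpace.comap (C.indicator (1 : Ω → ℝ)) inferInstance ≤
      MeasurableSpace.generateFrom {C} :=
    (measurable_const.indicator
      (MeasurableSpace.measurableSet_generateFrom (Set.mem_singleton C))).comap_le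
  exact indep_of_indep_of_le_left (indep_of_indep_of_le_right h (comap_le B)) (comap_le A)

variable [IsProbabilityMeasure μ] {A : ι → Set Ω} {s : Finset ι}

lemma variance_sum_indicator_one_le (hA : ∀ i ∈ s, MeasurableSet (A i))
    (hindep : (s : Set ι).Pairwise fun i j => IndepSet (A i) (A j) μ) :
    variance (∑ i ∈ s, (A i).indicator (1 : Ω → ℝ)) μ ≤ ∑ i ∈ s, μ.real (A i) := by
  have memLp (i) (hi : i ∈ s) : MemLp ((A i).indicator (1 : Ω → ℝ)) 2 μ :=
    (memLp_const 1).indicator (hA i hi)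
  rw [IndepFun.variance_sum memLp fun i hi j hj hij =>
    indepFun_indicator_one_of_indepSet (hindep hi hj hij)]
  refine Finset.sum_le_sum fun i hi => ?_
  calc variance ((A i).indicator (1 : Ω → ℝ)) μ
      ≤ ∫ x, ((A i).indicator (1 : Ω → ℝ) ^ 2) x ∂μ :=
        variance_le_expectation_sq (memLp i hi).aestronglyMeasurable
    _ = ∫ x, (A i).indicator (1 : Ω → ℝ) x ∂μ := by
        congr 1 with x
        by_cases hx : x ∈ A i <;> simp [hx]
    _ = μ.real (A i) := integral_indicator_one (hA i hi)

lemma measureReal_half_sum_le_abs_sum_indicator_one_sub_le (hA : ∀ i ∈ s, MeasurableSet (A i))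
    (hindep : (s : Set ι).Pairwise fun i j => IndepSet (A i) (A j) μ)
    (hpos : 0 < ∑ i ∈ s, μ.real (A i)) :
    μ.real {x | (∑ i ∈ s, μ.real (A i)) / 2 ≤
        |(∑ i ∈ s, (A i).indicator (1 : Ω → ℝ)) x - ∑ i ∈ s, μ.real (A i)|} ≤
      4 / ∑ i ∈ s, μ.real (A i) := by
  set p := ∑ i ∈ s, μ.real (A i)
  set X : Ω → ℝ := ∑ i ∈ s, (A i).indicator 1 with hX
  have memLp_X : MemLp X 2 μ :=
    memLp_finsetSum' s fun i hi => (memLp_const 1).indicator (hA i hi)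
  have expectation_X : ∫ x, X x ∂μ = p := by
    simp only [hX, Finset.sum_apply]
    rw [integral_finsetSum s fun i hi => (integrable_const 1).indicator (hA i hi)]
    exact Finset.sum_congr rfl fun i hi => integral_indicator_one (hA i hi)
  have chebyshev := meas_ge_le_variance_div_sq memLp_X (half_pos hpos)
  rw [expectation_X] at chebyshev
  refine ENNReal.toReal_le_of_le_ofReal (by positivity)
    (chebyshev.trans (ENNReal.ofReal_le_ofReal ?_))
  calc variance X μ / (p / 2) ^ 2 ≤ p / (p / 2) ^ 2 := by
        gcongr
        exact variance_sum_indicator_one_le hA hindep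
    _ = 4 / p := by field_simp; norm_num

/-- With high probability about `p = ∑ μ (A i)` of the events `A i` occur, by Chebyshev, while
`∑ 1_{A i} f i < p / 2`, by Markov; then `f i < 1` for one of the events which occur. -/
lemma measureReal_forall_mem_imp_one_le_le {f : ι → Ω → ℝ} {η : ℝ}
    (hA : ∀ i ∈ s, MeasurableSet (A i))
    (hindep : (s : Set ι).Pairwise fun i j => IndepSet (A i) (A j) μ)
    (hf_nonneg : ∀ i ∈ s, 0 ≤ f i) (hf : ∀ i ∈ s, IntegrableOn (f i) (A i) μ)
    (hfA : ∀ i ∈ s, ∫ x in A i, f i x ∂μ ≤ η * μ.real (A i))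
    (hpos : 0 < ∑ i ∈ s, μ.real (A i)) :
    μ.real {x | ∀ i ∈ s, x ∈ A i → 1 ≤ f i x} ≤ 4 / ∑ i ∈ s, μ.real (A i) + 2 * η := by
  set p := ∑ i ∈ s, μ.real (A i)
  set X : Ω → ℝ := ∑ i ∈ s, (A i).indicator 1 with hX
  set W : Ω → ℝ := fun x => ∑ i ∈ s, (A i).indicator (f i) x with hW
  have W_nonneg : 0 ≤ W := fun x =>
    Finset.sum_nonneg fun i hi => Set.indicator_nonneg (fun x _ => hf_nonneg i hi x) x
  have integrable_W : Integrable W μ :=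
    integrable_finsetSum s fun i hi => (hf i hi).integrable_indicator (hA i hi)
  have expectation_W : ∫ x, W x ∂μ ≤ η * p := by
    rw [hW, integral_finsetSum s fun i hi => (hf i hi).integrable_indicator (hA i hi),
      Finset.mul_sum]
    exact Finset.sum_le_sum fun i hi => (integral_indicator (hA i hi)).trans_le (hfA i hi)
  have markov : μ.real {x | p / 2 ≤ W x} ≤ 2 * η := by
    have := mul_meas_ge_le_integral_of_nonneg (ae_of_all μ W_nonneg) integrable_W (p / 2)
    nlinarith
  refine (measureReal_mono fun x hx => ?_).trans
    ((measureReal_union_le _ _).trans (add_le_add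
      (measureReal_half_sum_le_abs_sum_indicator_one_sub_le hA hindep hpos) markov))
  have X_le_W : X x ≤ W x := by
    simp only [hX, hW, Finset.sum_apply]
    refine Finset.sum_le_sum fun i hi => ?_
    by_cases hxi : x ∈ A i
    · simpa [hxi] using hx i hi hxi
    · simp [hxi]
  by_contra! hnot
  simp only [Set.mem_union, Set.mem_ofPred_eq, not_or, not_le] at hnot
  linarith [neg_le_abs (X x - p)]

lemma measureReal_forall_ge_mem_imp_one_le_le {A : ℕ → Set Ω} {f : ℕ → Ω → ℝ} {η : ℝ} {M : ℕ}
    (hA : ∀ i, MeasurableSet (A i)) (hindep : Pairwise fun i j => IndepSet (A i) (A j) μ)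
    (hsum : ¬ Summable fun i => μ.real (A i))
    (hf_nonneg : ∀ i, 0 ≤ f i) (hf : ∀ i, IntegrableOn (f i) (A i) μ)
    (hfA : ∀ i ≥ M, ∫ x in A i, f i x ∂μ ≤ η * μ.real (A i)) :
    μ.real {x | ∀ i ≥ M, x ∈ A i → 1 ≤ f i x} ≤ 2 * η := by
  have tendsto_sum : Tendsto (fun K => ∑ i ∈ Finset.Ico M K, μ.real (A i)) atTop atTop := by
    have := (not_summable_iff_tendsto_nat_atTop_of_nonneg fun i => measureReal_nonneg).1 hsum
    refine (tendsto_atTop_add_const_right _ (-∑ i ∈ Finset.range M, μ.real (A i)) this).congr' ?_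
    filter_upwards [eventually_ge_atTop M] with K hK
    rw [Finset.sum_Ico_eq_sub _ hK, sub_eq_add_neg]
  refine le_of_tendsto_of_tendsto tendsto_const_nhds
    (by simpa using (tendsto_sum.const_div_atTop 4).add_const (2 * η)) ?_
  filter_upwards [tendsto_sum.eventually_gt_atTop 0] with K hK
  have subset : {x | ∀ i ≥ M, x ∈ A i → 1 ≤ f i x} ⊆
      {x | ∀ i ∈ Finset.Ico M K, x ∈ A i → 1 ≤ f i x} :=
    fun x hx i hi => hx i (Finset.mem_Ico.1 hi).1
  exact (measureReal_mono subset).trans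
    (measureReal_forall_mem_imp_one_le_le (fun i _ => hA i) (fun i _ j _ hij => hindep hij)
      (fun i _ => hf_nonneg i) (fun i _ => hf i) (fun i hi => hfA i (Finset.mem_Ico.1 hi).1) hK)

theorem ae_frequently_mem_and_lt_one {A : ℕ → Set Ω} {f : ℕ → Ω → ℝ} {δ : ℕ → ℝ}
    (hA : ∀ i, MeasurableSet (A i)) (hindep : Pairwise fun i j => IndepSet (A i) (A j) μ)
    (hsum : ¬ Summable fun i => μ.real (A i))
    (hf_nonneg : ∀ i, 0 ≤ f i) (hf : ∀ i, IntegrableOn (f i) (A i) μ)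
    (hfA : ∀ i, ∫ x in A i, f i x ∂μ ≤ δ i * μ.real (A i)) (hδ : Tendsto δ atTop (𝓝 0)) :
    ∀ᵐ x ∂μ, ∃ᶠ i in atTop, x ∈ A i ∧ f i x < 1 := by
  set B : ℕ → Set Ω := fun M => {x | ∀ i ≥ M, x ∈ A i → 1 ≤ f i x} with hB
  have hB_mono : Monotone B := fun M M' hMM' x hx i hi => hx i (hMM'.trans hi)
  have measure_B (M : ℕ) : μ (B M) = 0 := by
    rw [← measureReal_eq_zero_iff]
    refine le_antisymm (le_of_forall_pos_le_add fun η hη => ?_) measureReal_nonneg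
    obtain ⟨M', hM'⟩ := eventually_atTop.1 (hδ.eventually_le_const (half_pos hη))
    calc μ.real (B M) ≤ μ.real (B (max M M')) := measureReal_mono (hB_mono (le_max_left M M'))
      _ ≤ 2 * (η / 2) :=
        measureReal_forall_ge_mem_imp_one_le_le hA hindep hsum hf_nonneg hf fun i hi =>
          (hfA i).trans (mul_le_mul_of_nonneg_right (hM' i ((le_max_right M M').trans hi))
            measureReal_nonneg)
      _ = 0 + η := by ring
  filter_upwards [ae_all_iff.2 fun M => measure_eq_zero_iff_ae_notMem.1 (measure_B M)] with x hx
  refine frequently_atTop.2 fun M => ?_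
  simpa [hB] using hx M

end BorelCantelli

section Digits

open ProbabilityTheory

instance isProbabilityMeasure_restrict_Ioo_zero_one :
    IsProbabilityMeasure (volume.restrict (Set.Ioo (0 : ℝ) 1)) :=
  ⟨by simp⟩

variable {m : ℕ}

lemma volume_floor_mul_eq_inter_fract_mul_mem (hm : 0 < m) (k : ℤ) (B : Set ℝ) :
    volume ({x : ℝ | ⌊m * x⌋ = k} ∩ {x : ℝ | Int.fract (m * x) ∈ B}) =
      ENNReal.ofReal (m : ℝ)⁻¹ * volume (B ∩ Set.Ico 0 1) := by
  have heq : {x : ℝ | ⌊m * x⌋ = k} ∩ {x : ℝ | Int.fract (m * x) ∈ B} =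
      (fun x : ℝ => m * x) ⁻¹' ((fun y => y + (-k : ℝ)) ⁻¹' (B ∩ Set.Ico 0 1)) := by
    ext x
    simp only [Set.mem_inter_iff, Set.mem_ofPred_eq, Set.mem_preimage, Set.mem_Ico]
    constructor
    · rintro ⟨rfl, hB⟩
      exact ⟨hB, Int.fract_nonneg _, Int.fract_lt_one _⟩
    · rintro ⟨hB, h0, h1⟩
      have hk : ⌊m * x⌋ = k := Int.floor_eq_iff.2 ⟨by linarith, by linarith⟩
      exact ⟨hk, by rwa [Int.fract, hk, sub_eq_add_neg]⟩
  rw [heq, Real.volume_preimage_mul_left (by positivity), measure_preimage_add_right,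
    abs_of_nonneg (by positivity)]

lemma measurableSet_fract_mul_mem (m : ℕ) {B : Set ℝ} (hB : MeasurableSet B) :
    MeasurableSet {x : ℝ | Int.fract (m * x) ∈ B} :=
  (measurable_fract.comp (measurable_const_mul _)) hB

lemma volume_restrict_floor_mul_mem_inter_fract_mul_mem (hm : 0 < m) (S : Set ℤ) {B : Set ℝ}
    (hB : MeasurableSet B) :
    volume.restrict (Set.Ioo (0 : ℝ) 1)
        ({x : ℝ | ⌊m * x⌋ ∈ S} ∩ {x : ℝ | Int.fract (m * x) ∈ B}) =
      (S ∩ Set.Ico 0 (m : ℤ)).encard * (ENNReal.ofReal (m : ℝ)⁻¹ * volume (B ∩ Set.Ico 0 1)) := by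
  have hm' : (0 : ℝ) < m := by exact_mod_cast hm
  have heq : {x : ℝ | ⌊m * x⌋ ∈ S} ∩ {x : ℝ | Int.fract (m * x) ∈ B} ∩ Set.Ico 0 1 =
      ⋃ k ∈ S ∩ Set.Ico 0 (m : ℤ), {x : ℝ | ⌊m * x⌋ = k} ∩ {x : ℝ | Int.fract (m * x) ∈ B} := by
    ext x
    have : x ∈ Set.Ico 0 1 ↔ ⌊m * x⌋ ∈ Set.Ico 0 (m : ℤ) := by
      simp [Int.floor_lt, Int.floor_nonneg, hm']
    simp only [Set.mem_inter_iff, Set.mem_iUnion, this, Set.mem_ofPred_eq]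
    grind
  rw [restrict_Ioo_eq_restrict_Ico, Measure.restrict_apply' measurableSet_Ico, heq,
    measure_biUnion (Set.to_countable _)]
  · simp only [volume_floor_mul_eq_inter_fract_mul_mem hm, ENNReal.tsum_set_const]
  · intro k _ l _ hkl
    refine Set.disjoint_left.2 fun x hxk hxl => hkl (hxk.1.symm.trans hxl.1)
  · exact fun k _ => ((Int.measurable_floor.comp (measurable_const_mul _))
      (measurableSet_singleton k)).inter (measurableSet_fract_mul_mem m hB)

lemma volume_restrict_fract_mul_mem (hm : 0 < m) {B : Set ℝ} (hB : MeasurableSet B) :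
    volume.restrict (Set.Ioo (0 : ℝ) 1) {x : ℝ | Int.fract (m * x) ∈ B} =
      volume (B ∩ Set.Ico 0 1) := by
  have h := volume_restrict_floor_mul_mem_inter_fract_mul_mem hm .univ hB
  have card_mul : ((Set.Ico 0 (m : ℤ)).encard : ENNReal) * ENNReal.ofReal (m : ℝ)⁻¹ = 1 := by
    rw [ENNReal.ofReal_inv_of_pos (by positivity), Set.encard_eq_coe_toFinset_card]
    simpa using ENNReal.mul_inv_cancel (Nat.cast_ne_zero.2 hm.ne') (ENNReal.natCast_ne_top m)
  simpa only [Set.mem_univ, Set.ofPred_true, Set.univ_inter, ← mul_assoc, card_mul, one_mul]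
    using h

theorem indepFun_floor_mul_fract_mul (hm : 0 < m) :
    IndepFun (fun x : ℝ => ⌊m * x⌋) (fun x : ℝ => Int.fract (m * x))
      (volume.restrict (Set.Ioo (0 : ℝ) 1)) := by
  rw [indepFun_iff_measure_inter_preimage_eq_mul]
  intro S B _ hB
  have floor_mem := volume_restrict_floor_mul_mem_inter_fract_mul_mem hm S .univ
  simp only [Set.mem_univ, Set.ofPred_true, Set.inter_univ, Set.univ_inter, Real.volume_Ico,
    sub_zero, ENNReal.ofReal_one, mul_one] at floor_mem
  calc _ = _ := volume_restrict_floor_mul_mem_inter_fract_mul_mem hm S hB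
    _ = _ := by rw [← mul_assoc, ← floor_mem, ← volume_restrict_fract_mul_mem hm hB]; rfl

/-- The set of the points `x` such that `m * x` exceeds an integer by less than `1 / q`. There all
the cosines `cos (2π m l x)` with `l` much smaller than `q` are close to `1`. -/
def peakSet (m q : ℕ) : Set ℝ := {x | Int.fract (m * x) < 1 / q}

lemma measurableSet_peakSet (m q : ℕ) : MeasurableSet (peakSet m q) :=
  measurableSet_fract_mul_mem m measurableSet_Iio

lemma measureReal_peakSet (hm : 0 < m) {q : ℕ} (hq : 0 < q) :
    (volume.restrict (Set.Ioo (0 : ℝ) 1)).real (peakSet m q) = 1 / q := by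
  have q_inv_le_one : (1 : ℝ) / q ≤ 1 := div_le_self zero_le_one (by exact_mod_cast hq)
  have h := volume_restrict_fract_mul_mem hm (measurableSet_Iio (a := (1 : ℝ) / q))
  rw [Set.inter_comm, Set.Ico_inter_Iio, min_eq_right q_inv_le_one, Real.volume_Ico, sub_zero] at h
  exact (congrArg ENNReal.toReal h).trans (ENNReal.toReal_ofReal (by positivity))

lemma mem_peakSet_iff_floor (m : ℕ) {q : ℕ} (hq : 0 < q) (x : ℝ) :
    x ∈ peakSet m q ↔ ⌊(q : ℝ) * (m * x)⌋ % (q : ℤ) = 0 := by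
  have hq' : (0 : ℝ) < q := by exact_mod_cast hq
  set y := (m : ℝ) * x
  have floor_emod : ⌊(q : ℝ) * y⌋ % (q : ℤ) = ⌊(q : ℝ) * Int.fract y⌋ := by
    have : (q : ℝ) * y = (q : ℝ) * Int.fract y + ((q * ⌊y⌋ : ℤ) : ℝ) := by
      push_cast
      rw [← mul_add, Int.fract_add_floor]
    rw [this, Int.floor_add_intCast, Int.add_mul_emod_self_left]
    refine Int.emod_eq_of_lt (Int.floor_nonneg.2 (by positivity)) (Int.floor_lt.2 ?_)
    exact mul_lt_of_lt_one_right hq' (Int.fract_lt_one y)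
  rw [floor_emod, Int.floor_eq_zero_iff, peakSet, Set.mem_ofPred_eq, lt_div_iff₀' hq']
  exact ⟨fun h => ⟨by positivity, h⟩, fun h => h.2⟩

lemma indepSet_peakSet {m₁ q₁ m q : ℕ} (hm : 0 < m) (hdvd : m₁ * q₁ ∣ m) :
    IndepSet (peakSet m₁ q₁) (peakSet m q) (volume.restrict (Set.Ioo (0 : ℝ) 1)) := by
  obtain ⟨t, rfl⟩ := hdvd
  have ht : 0 < t := Nat.pos_of_mul_pos_left hm
  have hq₁ : 0 < q₁ := Nat.pos_of_mul_pos_left (Nat.pos_of_mul_pos_right hm)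
  have peakSet_eq : peakSet m₁ q₁ =
      (fun x : ℝ => ⌊((m₁ * q₁ * t : ℕ) : ℝ) * x⌋) ⁻¹' {k | k / (t : ℤ) % (q₁ : ℤ) = 0} := by
    ext x
    have scale : ((m₁ * q₁ * t : ℕ) : ℝ) * x / t = q₁ * (m₁ * x) := by
      push_cast
      field_simp
    rw [mem_peakSet_iff_floor m₁ hq₁, Set.mem_preimage, Set.mem_ofPred_eq,
      ← Int.floor_div_natCast, scale]
  rw [indepSet_iff_measure_inter_eq_mul (measurableSet_peakSet _ _)
    (measurableSet_peakSet _ _) (volume.restrict (Set.Ioo (0 : ℝ) 1)),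
    peakSet_eq]
  exact (indepFun_floor_mul_fract_mul hm).measure_inter_preimage_eq_mul _ _ .of_discrete
    measurableSet_Iio

end Digits

section Orthogonality

variable {m : ℕ}

/-- Translating by the period `1 / m` multiplies the integral by `exp (2π i a / m) ≠ 1`. -/
lemma integral_exp_mul_eq_zero_of_periodic {a : ℤ} {f : ℝ → ℂ} (hm : 0 < m)
    (hf : Function.Periodic f (1 / m)) (ha : ¬ (m : ℤ) ∣ a) :
    ∫ x in (0 : ℝ)..1, Complex.exp (2 * π * Complex.I * a * x) * f x = 0 := by
  have hm' : (m : ℂ) ≠ 0 := by exact_mod_cast hm.ne'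
  set g : ℝ → ℂ := fun x => Complex.exp (2 * π * Complex.I * a * x) * f x with hg
  set ζ : ℂ := Complex.exp (2 * π * Complex.I * a / m) with hζ
  have g_shift (x : ℝ) : g (x + 1 / m) = ζ * g x := by
    simp only [hg, hζ, hf x, ← mul_assoc, ← Complex.exp_add]
    congr 2
    push_cast
    ring
  have g_periodic : Function.Periodic g 1 := by
    have f_periodic : Function.Periodic f 1 := by
      simpa only [mul_one_div_cancel (Nat.cast_ne_zero.2 hm.ne' : (m : ℝ) ≠ 0)] using hf.nat_mul m
    intro x
    have : 2 * π * Complex.I * a * (x + 1 : ℝ) =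
        2 * π * Complex.I * a * x + a * (2 * π * Complex.I) := by
      push_cast
      ring
    simp only [hg, f_periodic x, this, Complex.exp_add, Complex.exp_int_mul_two_pi_mul_I, mul_one]
  have ζ_ne_one : ζ ≠ 1 := by
    rw [hζ, Ne, Complex.exp_eq_one_iff]
    rintro ⟨n, hn⟩
    have : (a : ℂ) = m * n := by
      refine mul_left_cancel₀ Complex.two_pi_I_ne_zero ?_
      rw [div_eq_iff hm'] at hn
      linear_combination hn
    exact ha ⟨n, by exact_mod_cast this⟩
  have integral_eq : ∫ x in (0 : ℝ)..1, g x = ζ * ∫ x in (0 : ℝ)..1, g x := calc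
    ∫ x in (0 : ℝ)..1, g x = ∫ x in (1 / m : ℝ)..(1 / m + 1), g x := by
      simpa using g_periodic.intervalIntegral_add_eq 0 (1 / m)
    _ = ∫ x in (0 : ℝ)..1, g (x + 1 / m) := by
      rw [intervalIntegral.integral_comp_add_right, zero_add, add_comm]
    _ = ζ * ∫ x in (0 : ℝ)..1, g x := by simp only [g_shift, intervalIntegral.integral_const_mul]
  have : (ζ - 1) * ∫ x in (0 : ℝ)..1, g x = 0 := by linear_combination -integral_eq
  exact (mul_eq_zero.1 this).resolve_left (sub_ne_zero.2 ζ_ne_one)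

variable {f : ℝ → ℝ}

lemma integral_cos_mul_eq_zero_of_periodic {a : ℤ} (hm : 0 < m)
    (hf : Function.Periodic f (1 / m)) (hint : IntervalIntegrable f volume 0 1)
    (ha : ¬ (m : ℤ) ∣ a) :
    ∫ x in (0 : ℝ)..1, cos (2 * π * a * x) * f x = 0 := by
  have hint' : IntervalIntegrable
      (fun x : ℝ => Complex.exp (2 * π * Complex.I * a * x) * (f x : ℂ)) volume 0 1 :=
    IntervalIntegrable.continuousOn_mul ⟨hint.1.ofReal, hint.2.ofReal⟩ (by fun_prop)
  have h := Complex.reCLM.intervalIntegral_comp_comm hint'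
  rw [integral_exp_mul_eq_zero_of_periodic hm (fun x => by rw [hf x]) ha, map_zero] at h
  rw [← h]
  congr 1 with x
  have : 2 * π * Complex.I * a * x = (2 * π * a * x : ℝ) * Complex.I := by
    push_cast
    ring
  rw [this, Complex.reCLM_apply, Complex.re_mul_ofReal, Complex.exp_ofReal_mul_I_re]

lemma intervalIntegrable_cos_mul (hint : IntervalIntegrable f volume 0 1) (a : ℝ) :
    IntervalIntegrable (fun x => cos (2 * π * a * x) * f x) volume 0 1 :=
  hint.continuousOn_mul (by fun_prop)

lemma integral_cos_mul_cos_mul_of_periodic {a b : ℕ} (hf : Function.Periodic f (1 / m))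
    (hint : IntervalIntegrable f volume 0 1) (ha : 0 < a) (ham : 2 * a < m) (hbm : 2 * b < m) :
    ∫ x in (0 : ℝ)..1, cos (2 * π * a * x) * (cos (2 * π * b * x) * f x) =
      if a = b then (∫ x in (0 : ℝ)..1, f x) / 2 else 0 := by
  have hm : 0 < m := by omega
  have product_to_sum (x : ℝ) : cos (2 * π * a * x) * (cos (2 * π * b * x) * f x) =
      (cos (2 * π * (a - b : ℤ) * x) * f x + cos (2 * π * (a + b : ℤ) * x) * f x) / 2 := by
    push_cast
    rw [mul_sub, mul_add, sub_mul, add_mul, cos_sub, cos_add]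
    ring
  have sum_freq : ∫ x in (0 : ℝ)..1, cos (2 * π * (a + b : ℤ) * x) * f x = 0 :=
    integral_cos_mul_eq_zero_of_periodic hm hf hint fun hdvd => by
      have := Int.le_of_dvd (by omega) hdvd
      omega
  simp only [product_to_sum, intervalIntegral.integral_div]
  rw [intervalIntegral.integral_add (intervalIntegrable_cos_mul hint _)
    (intervalIntegrable_cos_mul hint _), sum_freq, add_zero]
  split_ifs with hab
  · simp [hab]
  · rw [integral_cos_mul_eq_zero_of_periodic hm hf hint, zero_div]
    intro hdvd
    have := Int.eq_zero_of_abs_lt_dvd hdvd (by rw [abs_lt]; omega)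
    omega

/-- The partial sums of the cosine series with frequencies `ν`. -/
def cosSum (ν : ℕ → ℕ) (N : ℕ) (x : ℝ) : ℝ := ∑ k ∈ Finset.range N, cos (2 * π * ν k * x)

lemma continuous_cosSum (ν : ℕ → ℕ) (N : ℕ) : Continuous (cosSum ν N) := by
  unfold cosSum
  fun_prop

lemma integral_cosSum_sq_mul_of_periodic {ν : ℕ → ℕ} {N : ℕ} (hν : ν.Injective)
    (hν_pos : ∀ k, 0 < ν k) (hνm : ∀ k < N, 2 * ν k < m) (hf : Function.Periodic f (1 / m))
    (hint : IntervalIntegrable f volume 0 1) :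
    ∫ x in (0 : ℝ)..1, cosSum ν N x ^ 2 * f x = N / 2 * ∫ x in (0 : ℝ)..1, f x := by
  have expand (x : ℝ) : cosSum ν N x ^ 2 * f x = ∑ k ∈ Finset.range N, ∑ l ∈ Finset.range N,
      cos (2 * π * ν k * x) * (cos (2 * π * ν l * x) * f x) := by
    rw [cosSum, sq, Finset.sum_mul_sum, Finset.sum_mul]
    simp only [Finset.sum_mul, mul_assoc (cos _)]
  have integrable (k l : ℕ) : IntervalIntegrable
      (fun x => cos (2 * π * ν k * x) * (cos (2 * π * ν l * x) * f x)) volume 0 1 :=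
    intervalIntegrable_cos_mul (intervalIntegrable_cos_mul hint _) _
  simp only [expand]
  rw [intervalIntegral.integral_finsetSum fun k _ => by
    simpa only [Finset.sum_fn] using IntervalIntegrable.sum _ fun l _ => integrable k l]
  have row (k) (hk : k ∈ Finset.range N) : ∫ x in (0 : ℝ)..1, ∑ l ∈ Finset.range N,
      cos (2 * π * ν k * x) * (cos (2 * π * ν l * x) * f x) = (∫ x in (0 : ℝ)..1, f x) / 2 := by
    rw [intervalIntegral.integral_finsetSum fun l _ => integrable k l,
      Finset.sum_congr rfl fun l hl => integral_cos_mul_cos_mul_of_periodic hf hint (hν_pos k)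
        (hνm k (Finset.mem_range.1 hk)) (hνm l (Finset.mem_range.1 hl))]
    simp [hν.eq_iff, Finset.mem_range.1 hk]
  rw [Finset.sum_congr rfl row, Finset.sum_const, Finset.card_range, nsmul_eq_mul]
  ring

lemma periodic_indicator_peakSet (hm : 0 < m) (q : ℕ) :
    Function.Periodic ((peakSet m q).indicator (1 : ℝ → ℝ)) (1 / m) := by
  intro x
  have : x + 1 / m ∈ peakSet m q ↔ x ∈ peakSet m q := by
    rw [peakSet, Set.mem_ofPred_eq, mul_add, mul_one_div_cancel (by positivity),
      Int.fract_add_one, Set.mem_ofPred_eq]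
  by_cases hx : x ∈ peakSet m q
  · rw [Set.indicator_of_mem hx, Set.indicator_of_mem (this.2 hx), Pi.one_apply, Pi.one_apply]
  · rw [Set.indicator_of_notMem hx, Set.indicator_of_notMem (this.not.2 hx)]

lemma setIntegral_peakSet_cosSum_sq {ν : ℕ → ℕ} {N : ℕ} (hm : 0 < m) {q : ℕ} (hq : 0 < q)
    (hν : ν.Injective) (hν_pos : ∀ k, 0 < ν k) (hνm : ∀ k < N, 2 * ν k < m) :
    ∫ x in peakSet m q, cosSum ν N x ^ 2 ∂volume.restrict (Set.Ioo 0 1) = N / 2 * (1 / q) := by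
  set μ := volume.restrict (Set.Ioo (0 : ℝ) 1)
  set f : ℝ → ℝ := (peakSet m q).indicator 1 with hf
  have integral_Ioo (g : ℝ → ℝ) : ∫ x, g x ∂μ = ∫ x in (0 : ℝ)..1, g x := by
    rw [intervalIntegral.integral_of_le zero_le_one, ← integral_Ioc_eq_integral_Ioo]
  have hint : IntervalIntegrable f volume 0 1 := by
    refine (intervalIntegrable_iff_integrableOn_Ioc_of_le zero_le_one).2 ?_
    exact (integrable_const 1).indicator (measurableSet_peakSet m q)
  calc ∫ x in peakSet m q, cosSum ν N x ^ 2 ∂μ = ∫ x, cosSum ν N x ^ 2 * f x ∂μ := by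
        rw [← MeasureTheory.integral_indicator (measurableSet_peakSet m q)]
        congr 1 with x
        by_cases hx : x ∈ peakSet m q <;> simp [hf, hx]
    _ = N / 2 * ∫ x, f x ∂μ := by
        rw [integral_Ioo, integral_Ioo, integral_cosSum_sq_mul_of_periodic hν hν_pos hνm
          (periodic_indicator_peakSet hm q) hint]
    _ = N / 2 * (1 / q) := by
        rw [hf, integral_indicator_one (measurableSet_peakSet m q), measureReal_peakSet hm hq]

end Orthogonality

section BlockPeak

lemma half_le_cos_of_fract_mul_lt {y : ℝ} {l : ℕ} (hl : l * Int.fract y ≤ 1 / 6) :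
    1 / 2 ≤ cos (2 * π * (l * y)) := by
  have phase : 2 * π * (l * y) = 2 * π * (l * Int.fract y) + (l * ⌊y⌋ : ℤ) * (2 * π) := by
    push_cast
    linear_combination -(2 * π * l) * Int.fract_add_floor y
  rw [phase, cos_add_int_mul_two_pi, ← cos_pi_div_three]
  have := Int.fract_nonneg y
  refine cos_le_cos_of_nonneg_of_le_pi (by positivity) (by linarith [pi_pos]) ?_
  nlinarith [pi_pos]

lemma half_le_sum_cos_of_mem_peakSet {m r : ℕ} {x : ℝ} (hx : x ∈ peakSet m (16 * r)) :
    (r : ℝ) / 2 ≤ ∑ j ∈ Finset.range r, cos (2 * π * (m * (r + j) : ℕ) * x) := by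
  have : ∀ j ∈ Finset.range r, (1 / 2 : ℝ) ≤ cos (2 * π * (m * (r + j) : ℕ) * x) := by
    intro j hj
    have hj' : (j : ℝ) < r := by exact_mod_cast Finset.mem_range.1 hj
    have hr : 0 < r := (Nat.zero_le j).trans_lt (Finset.mem_range.1 hj)
    have fract_lt : Int.fract (m * x) * (16 * r) < 1 := by
      have : Int.fract (m * x) < 1 / (16 * r : ℕ) := hx
      rwa [lt_div_iff₀ (by positivity), Nat.cast_mul, Nat.cast_ofNat] at this
    have : 2 * π * (m * (r + j) : ℕ) * x = 2 * π * ((r + j : ℕ) * (m * x)) := by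
      push_cast
      ring
    rw [this]
    refine half_le_cos_of_fract_mul_lt ?_
    push_cast
    nlinarith [Int.fract_nonneg (m * x)]
  calc (r : ℝ) / 2 = ∑ j ∈ Finset.range r, (1 / 2 : ℝ) := by simp [div_eq_mul_inv]
    _ ≤ _ := Finset.sum_le_sum this

end BlockPeak

section Reindexing

lemma exists_strictMono_comp_perm_eq {ν : ℕ → ℕ} (hν : ν.Injective) :
    ∃ (n : ℕ → ℕ) (σ : Equiv.Perm ℕ), StrictMono n ∧ Set.range n = Set.range ν ∧ n ∘ σ = ν := by
  classical
  have : Infinite (Set.range ν) := Set.infinite_coe_iff.2 (Set.infinite_range_of_injective hν)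
  set e := Nat.Subtype.orderIsoOfNat (Set.range ν)
  refine ⟨fun k => e k, (Equiv.ofInjective ν hν).trans e.symm.toEquiv,
    fun k l hkl => e.strictMono hkl, ?_, ?_⟩
  · rw [← Function.comp_def, Set.range_comp, e.surjective.range_eq, Set.image_univ,
      Subtype.range_coe]
  · ext k
    simp

lemma le_of_strictMono_of_range_subset {f n : ℕ → ℕ} (hf : StrictMono f) (hn : StrictMono n)
    (hfn : Set.range f ⊆ Set.range n) {b k : ℕ} (h : f b ≤ n k) : b ≤ k := by
  choose g hg using fun v => hfn (Set.mem_range_self v)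
  have hg_mono : StrictMono g := fun v w hvw => by
    rw [← hn.lt_iff_lt, hg, hg]
    exact hf hvw
  exact hg_mono.le_apply.trans (hn.le_iff_le.1 ((hg b).trans_le h))

end Reindexing

section Blocks

/-- The position at which block `t` starts, when blocks of lengths `2 ^ d 0, 2 ^ d 1, …` are
concatenated. -/
def blockStart (d : ℕ → ℕ) (t : ℕ) : ℕ := ∑ v ∈ Finset.range t, 2 ^ d v

lemma blockStart_succ (d : ℕ → ℕ) (t : ℕ) : blockStart d (t + 1) = blockStart d t + 2 ^ d t :=
  Finset.sum_range_succ _ _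

lemma strictMono_blockStart (d : ℕ → ℕ) : StrictMono (blockStart d) :=
  strictMono_nat_of_lt_succ fun t => by
    rw [blockStart_succ]
    exact Nat.lt_add_of_pos_right (by positivity)

lemma exists_blockStart_add_eq (d : ℕ → ℕ) (N : ℕ) :
    ∃ t, ∃ j < 2 ^ d t, blockStart d t + j = N := by
  induction N with
  | zero => exact ⟨0, 0, by positivity, by simp [blockStart]⟩
  | succ N ih =>
    obtain ⟨t, j, hj, rfl⟩ := ih
    rcases Nat.lt_or_ge (j + 1) (2 ^ d t) with h | h
    · exact ⟨t, j + 1, h, rfl⟩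
    · exact ⟨t + 1, 0, by positivity, by rw [blockStart_succ]; omega⟩

lemma bijective_blockStart_add (d : ℕ → ℕ) :
    Function.Bijective fun p : Σ t, Fin (2 ^ d t) => blockStart d p.1 + p.2 := by
  constructor
  · rintro ⟨t, j⟩ ⟨v, l⟩ (h : blockStart d t + j = blockStart d v + l)
    have mem_Ico (t) (j : Fin (2 ^ d t)) :
        blockStart d t + j ∈ Set.Ico (blockStart d t) (blockStart d (t + 1)) :=
      ⟨Nat.le_add_right _ _, by rw [blockStart_succ]; exact Nat.add_lt_add_left j.2 _⟩
    have mem_Ico' := mem_Ico v l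
    rw [← h] at mem_Ico'
    obtain rfl : t = v := by
      by_contra htv
      exact Set.disjoint_left.1 ((strictMono_blockStart d).monotone.pairwise_disjoint_on_Ico_succ
        htv) (mem_Ico t j) mem_Ico'
    simpa [Fin.ext_iff] using h
  · intro N
    obtain ⟨t, j, hj, rfl⟩ := exists_blockStart_add_eq d N
    exact ⟨⟨t, j, hj⟩, rfl⟩

/-- The correspondence between the pairs of a block and an offset in it, and the positions in the
concatenation of the blocks. -/
def blockEquiv (d : ℕ → ℕ) : (Σ t, Fin (2 ^ d t)) ≃ ℕ :=
  Equiv.ofBijective _ (bijective_blockStart_add d)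

/-- The sequence of frequencies made of successive blocks, block `t` being the `2 ^ d t` multiples
of `2 ^ (c t - d t)` in the octave `[2 ^ c t, 2 ^ (c t + 1))`, in increasing order. It is not
monotone when `c` is not. -/
def blockFreq (c d : ℕ → ℕ) (N : ℕ) : ℕ :=
  2 ^ (c ((blockEquiv d).symm N).1 - d ((blockEquiv d).symm N).1) *
    (2 ^ d ((blockEquiv d).symm N).1 + ((blockEquiv d).symm N).2)

variable {c d : ℕ → ℕ} {t j : ℕ}

lemma blockFreq_blockStart_add (c : ℕ → ℕ) (hj : j < 2 ^ d t) :
    blockFreq c d (blockStart d t + j) = 2 ^ (c t - d t) * (2 ^ d t + j) := by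
  have : (blockEquiv d).symm (blockStart d t + j) = ⟨t, j, hj⟩ :=
    (blockEquiv d).symm_apply_eq.2 rfl
  rw [blockFreq, this]

lemma blockFreq_pos (c d : ℕ → ℕ) (N : ℕ) : 0 < blockFreq c d N := by
  unfold blockFreq
  positivity

lemma two_pow_le_blockFreq (hdc : d t ≤ c t) (hj : j < 2 ^ d t) :
    2 ^ c t ≤ blockFreq c d (blockStart d t + j) := by
  rw [blockFreq_blockStart_add c hj, mul_add, ← pow_add, Nat.sub_add_cancel hdc]
  exact Nat.le_add_right _ _

lemma two_pow_sub_mul_two_pow_succ (hdc : d t ≤ c t) :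
    2 ^ (c t - d t) * 2 ^ (d t + 1) = 2 ^ (c t + 1) := by
  rw [← pow_add, ← add_assoc, Nat.sub_add_cancel hdc]

lemma blockFreq_lt_two_pow_succ (hdc : d t ≤ c t) (hj : j < 2 ^ d t) :
    blockFreq c d (blockStart d t + j) < 2 ^ (c t + 1) := by
  rw [blockFreq_blockStart_add c hj, ← two_pow_sub_mul_two_pow_succ hdc]
  gcongr
  rw [pow_succ]
  omega

lemma log_blockFreq (hdc : d t ≤ c t) (hj : j < 2 ^ d t) :
    Nat.log 2 (blockFreq c d (blockStart d t + j)) = c t :=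
  Nat.log_eq_of_pow_le_of_lt_pow (two_pow_le_blockFreq hdc hj) (blockFreq_lt_two_pow_succ hdc hj)

lemma injective_blockFreq (hc : c.Injective) (hdc : ∀ t, d t ≤ c t) :
    (blockFreq c d).Injective := by
  intro N M h
  obtain ⟨t, j, hj, rfl⟩ := exists_blockStart_add_eq d N
  obtain ⟨v, l, hl, rfl⟩ := exists_blockStart_add_eq d M
  obtain rfl : t = v := hc <| by rw [← log_blockFreq (hdc t) hj, h, log_blockFreq (hdc v) hl]
  rw [blockFreq_blockStart_add c hj, blockFreq_blockStart_add c hl] at h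
  rw [Nat.add_left_cancel (Nat.mul_left_cancel (by positivity) h)]

lemma blockFreq_add_two_pow_le_of_lt (hc : c.Injective) (hdc : ∀ t, d t ≤ c t) {N : ℕ}
    (hj : j < 2 ^ d t) (h : blockFreq c d (blockStart d t + j) < blockFreq c d N) :
    blockFreq c d (blockStart d t + j) + 2 ^ (c t - d t) ≤ blockFreq c d N := by
  obtain ⟨v, l, hl, rfl⟩ := exists_blockStart_add_eq d N
  rcases Nat.lt_or_ge (blockFreq c d (blockStart d v + l)) (2 ^ (c t + 1)) with hlt | hge
  · obtain rfl : v = t := hc <| by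
      rw [← log_blockFreq (hdc v) hl]
      exact Nat.log_eq_of_pow_le_of_lt_pow ((two_pow_le_blockFreq (hdc t) hj).trans h.le) hlt
    rw [blockFreq_blockStart_add c hj, blockFreq_blockStart_add c hl] at h ⊢
    rw [← Nat.mul_succ]
    exact Nat.mul_le_mul_left _ (Nat.lt_of_mul_lt_mul_left h)
  · refine le_trans ?_ hge
    rw [blockFreq_blockStart_add c hj, ← Nat.mul_succ, ← two_pow_sub_mul_two_pow_succ (hdc t),
      pow_succ]
    exact Nat.mul_le_mul_left _ (by omega)

lemma one_add_mul_blockFreq_le_of_lt (hc : c.Injective) (hdc : ∀ t, d t ≤ c t) {N : ℕ}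
    (hj : j < 2 ^ d t) (h : blockFreq c d (blockStart d t + j) < blockFreq c d N) {ε : ℝ}
    (hε_nonneg : 0 ≤ ε) (hε : ε * 2 ^ (d t + 1) ≤ 1) :
    (1 + ε) * blockFreq c d (blockStart d t + j) ≤ blockFreq c d N := by
  have spacing : (blockFreq c d (blockStart d t + j) : ℝ) + 2 ^ (c t - d t) ≤ blockFreq c d N := by
    exact_mod_cast blockFreq_add_two_pow_le_of_lt hc hdc hj h
  have octave : (blockFreq c d (blockStart d t + j) : ℝ) ≤ 2 ^ (c t - d t) * 2 ^ (d t + 1) := by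
    exact_mod_cast (blockFreq_lt_two_pow_succ (hdc t) hj).le.trans_eq
      (two_pow_sub_mul_two_pow_succ (hdc t)).symm
  calc (1 + ε) * (blockFreq c d (blockStart d t + j) : ℝ)
      ≤ blockFreq c d (blockStart d t + j) + ε * (2 ^ (c t - d t) * 2 ^ (d t + 1)) := by
        rw [add_mul, one_mul]
        gcongr
    _ = blockFreq c d (blockStart d t + j) + 2 ^ (c t - d t) * (ε * 2 ^ (d t + 1)) := by ring
    _ ≤ blockFreq c d (blockStart d t + j) + 2 ^ (c t - d t) := by
        gcongr
        exact mul_le_of_le_one_right (by positivity) hε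
    _ ≤ blockFreq c d N := spacing

end Blocks

section Peaks

open ProbabilityTheory

variable {c d : ℕ → ℕ}

lemma cosSum_blockStart_succ (c d : ℕ → ℕ) (t : ℕ) (x : ℝ) :
    cosSum (blockFreq c d) (blockStart d (t + 1)) x =
      cosSum (blockFreq c d) (blockStart d t) x +
        ∑ j ∈ Finset.range (2 ^ d t), cos (2 * π * (2 ^ (c t - d t) * (2 ^ d t + j) : ℕ) * x) := by
  rw [cosSum, blockStart_succ, Finset.sum_range_add]
  congr 1
  exact Finset.sum_congr rfl fun j hj => by rw [blockFreq_blockStart_add c (Finset.mem_range.1 hj)]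

lemma two_mul_blockFreq_lt_of_lt_blockStart {t N C : ℕ} (hdc : ∀ t, d t ≤ c t)
    (hC : ∀ v < t, c v + 2 ≤ C) (hN : N < blockStart d t) : 2 * blockFreq c d N < 2 ^ C := by
  obtain ⟨v, j, hj, rfl⟩ := exists_blockStart_add_eq d N
  have hvt : v < t := (strictMono_blockStart d).lt_iff_lt.1 ((Nat.le_add_right _ _).trans_lt hN)
  calc 2 * blockFreq c d (blockStart d v + j) < 2 * 2 ^ (c v + 1) := by
        gcongr
        exact blockFreq_lt_two_pow_succ (hdc v) hj
    _ = 2 ^ (c v + 2) := by ring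
    _ ≤ 2 ^ C := Nat.pow_le_pow_right two_pos (hC v hvt)

/-- A set of points at which all the cosines of block `t` are at least `1 / 2`. -/
def blockPeakSet (c d : ℕ → ℕ) (t : ℕ) : Set ℝ := peakSet (2 ^ (c t - d t)) (16 * 2 ^ d t)

lemma quarter_le_cosSum_of_mem_blockPeakSet {t : ℕ} {x : ℝ} (hx : x ∈ blockPeakSet c d t)
    (hprev : (4 * cosSum (blockFreq c d) (blockStart d t) x / 2 ^ d t) ^ 2 < 1) :
    2 ^ d t / 4 ≤ cosSum (blockFreq c d) (blockStart d (t + 1)) x := by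
  have block := half_le_sum_cos_of_mem_peakSet hx
  have prev : -1 < 4 * cosSum (blockFreq c d) (blockStart d t) x / 2 ^ d t :=
    (abs_lt.1 ((sq_lt_one_iff_abs_lt_one _).1 hprev)).1
  rw [lt_div_iff₀ (by positivity)] at prev
  rw [cosSum_blockStart_succ]
  push_cast at block ⊢
  linarith

lemma setIntegral_blockPeakSet_cosSum_sq {t : ℕ} (hc : c.Injective) (hdc : ∀ t, d t ≤ c t)
    (hsep : ∀ v < t, c v + 4 + d t ≤ c t) :
    ∫ x in blockPeakSet c d t, (4 * cosSum (blockFreq c d) (blockStart d t) x / 2 ^ d t) ^ 2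
        ∂volume.restrict (Set.Ioo 0 1) =
      8 * (blockStart d t / (2 ^ d t) ^ 2) *
        (volume.restrict (Set.Ioo (0 : ℝ) 1)).real (blockPeakSet c d t) := by
  have freq_lt (k) (hk : k < blockStart d t) : 2 * blockFreq c d k < 2 ^ (c t - d t) :=
    two_mul_blockFreq_lt_of_lt_blockStart hdc
      (fun v hv => by linarith [Nat.le_sub_of_add_le (hsep v hv)]) hk
  have integral_sq := setIntegral_peakSet_cosSum_sq (m := 2 ^ (c t - d t)) (q := 16 * 2 ^ d t)
    (by positivity) (by positivity) (injective_blockFreq hc hdc) (blockFreq_pos c d) freq_lt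
  simp only [div_pow, mul_pow, mul_div_right_comm, integral_const_mul]
  rw [blockPeakSet, integral_sq, measureReal_peakSet (by positivity) (by positivity)]
  ring

lemma indepSet_blockPeakSet {v t : ℕ} (hdc : d v ≤ c v) (hsep : c v + 4 + d t ≤ c t) :
    IndepSet (blockPeakSet c d v) (blockPeakSet c d t) (volume.restrict (Set.Ioo (0 : ℝ) 1)) := by
  refine indepSet_peakSet (by positivity) ?_
  have : 2 ^ (c v - d v) * (16 * 2 ^ d v) = 2 ^ (c v + 4) := by
    rw [mul_left_comm, ← pow_add, Nat.sub_add_cancel hdc, pow_add, mul_comm]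
    rfl
  rw [this]
  exact pow_dvd_pow 2 (by omega)

theorem ae_frequently_quarter_le_cosSum {τ : ℕ → ℕ} (hτ : StrictMono τ) (hc : c.Injective)
    (hdc : ∀ t, d t ≤ c t) (hsep : ∀ u, ∀ v < τ u, c v + 4 + d (τ u) ≤ c (τ u))
    (hsum : ¬ Summable fun u => 1 / (2 : ℝ) ^ d (τ u))
    (hlen : Tendsto (fun u => (blockStart d (τ u) : ℝ) / (2 ^ d (τ u)) ^ 2) atTop (𝓝 0)) :
    ∀ᵐ x ∂volume.restrict (Set.Ioo (0 : ℝ) 1),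
      ∃ᶠ u in atTop, 2 ^ d (τ u) / 4 ≤ cosSum (blockFreq c d) (blockStart d (τ u + 1)) x := by
  have indep : Pairwise fun u v => IndepSet (blockPeakSet c d (τ u)) (blockPeakSet c d (τ v))
      (volume.restrict (Set.Ioo (0 : ℝ) 1)) := by
    intro u v huv
    rcases huv.lt_or_gt with h | h
    · exact indepSet_blockPeakSet (hdc _) (hsep v _ (hτ h))
    · exact (indepSet_blockPeakSet (hdc _) (hsep u _ (hτ h))).symm
  have not_summable : ¬ Summable fun u =>
      (volume.restrict (Set.Ioo (0 : ℝ) 1)).real (blockPeakSet c d (τ u)) := by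
    refine fun h => hsum ((h.mul_left 16).congr fun u => ?_)
    rw [blockPeakSet, measureReal_peakSet (by positivity) (by positivity)]
    push_cast
    field_simp
  have integrable (u : ℕ) : IntegrableOn
      (fun x => (4 * cosSum (blockFreq c d) (blockStart d (τ u)) x / 2 ^ d (τ u)) ^ 2)
      (Set.Ioo 0 1) :=
    ((((continuous_cosSum _ _).const_mul 4).div_const _).pow 2).integrableOn_Icc.mono_set
      Set.Ioo_subset_Icc_self
  filter_upwards [ae_frequently_mem_and_lt_one (fun u => measurableSet_peakSet _ _) indep
    not_summable (fun u x => sq_nonneg _) (fun u => (integrable u).integrableOn)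
    (fun u => (setIntegral_blockPeakSet_cosSum_sq hc hdc (hsep u)).le)
    (by simpa using hlen.const_mul 8)] with x hx
  exact hx.mono fun u hu => quarter_le_cosSum_of_mem_blockPeakSet hu.1 hu.2

end Peaks

section Parameters

/-- The depth of the `u`-th long block: its length `2 ^ peakDepth u` is about `u log u`, so that the
reciprocals of the lengths barely fail to be summable. -/
def peakDepth (u : ℕ) : ℕ := Nat.log 2 u + Nat.log 2 (Nat.log 2 u + 1)

lemma monotone_peakDepth : Monotone peakDepth := fun u v huv => by
  unfold peakDepth
  gcongr

lemma two_pow_mul_log_add_one_le_two_mul_two_pow_peakDepth (u : ℕ) :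
    2 ^ Nat.log 2 u * (Nat.log 2 u + 1) ≤ 2 * 2 ^ peakDepth u := by
  rw [peakDepth, pow_add, mul_left_comm, ← pow_succ']
  gcongr
  exact (Nat.lt_pow_succ_log_self one_lt_two _).le

lemma two_pow_peakDepth_le (u : ℕ) :
    2 ^ peakDepth u ≤ 2 ^ Nat.log 2 u * (Nat.log 2 u + 1) := by
  rw [peakDepth, pow_add]
  gcongr
  exact Nat.pow_log_le_self 2 (Nat.succ_ne_zero _)

/-- By Cauchy condensation, since `2 ^ a / 2 ^ peakDepth (2 ^ a)` is at least `1 / (a + 1)`. -/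
lemma not_summable_one_div_two_pow_peakDepth : ¬ Summable fun u => 1 / (2 : ℝ) ^ peakDepth u := by
  intro h
  have condensed := (summable_condensed_iff_of_nonneg (fun u => by positivity)
    fun u v _ huv => one_div_le_one_div_of_le (by positivity)
      (pow_le_pow_right₀ one_le_two (monotone_peakDepth huv))).2 h
  refine Real.not_summable_one_div_natCast ((summable_nat_add_iff 1).1 ?_)
  refine condensed.of_nonneg_of_le (fun a => by positivity) fun a => ?_
  have : (2 : ℝ) ^ peakDepth (2 ^ a) ≤ 2 ^ a * (a + 1) := by
    have := two_pow_peakDepth_le (2 ^ a)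
    rw [Nat.log_pow one_lt_two] at this
    exact_mod_cast this
  rw [mul_one_div, le_div_iff₀ (by positivity), one_div_mul_eq_div, div_le_iff₀ (by positivity)]
  exact_mod_cast this

/-- The depths of a sequence of blocks in which long blocks alternate with isolated terms. -/
def blockDepth (t : ℕ) : ℕ := if Even t then 0 else peakDepth (t / 2)

/-- The octaves of the blocks: the isolated terms are the powers of `4`, while the `u`-th long block
lies so high that it is separated from the previous blocks and is preceded, in the increasing
enumeration, by at least `B u` of the powers of `4`. -/
def blockOctave (B : ℕ → ℕ) (t : ℕ) : ℕ :=
  if Even t then t else 2 * (∑ v ∈ Finset.range (t / 2 + 1), (B v + peakDepth v + 4)) + 1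

variable (B : ℕ → ℕ) (u : ℕ)

lemma blockDepth_two_mul : blockDepth (2 * u) = 0 := if_pos (even_two_mul u)

lemma blockDepth_two_mul_add_one : blockDepth (2 * u + 1) = peakDepth u := by
  rw [blockDepth, if_neg (by simp)]
  congr 1
  omega

lemma blockOctave_two_mul : blockOctave B (2 * u) = 2 * u := if_pos (even_two_mul u)

lemma blockOctave_two_mul_add_one : blockOctave B (2 * u + 1) =
    2 * (∑ v ∈ Finset.range (u + 1), (B v + peakDepth v + 4)) + 1 := by
  rw [blockOctave, if_neg (by simp)]
  congr 4
  omega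

lemma blockOctave_two_mul_add_one_lower :
    2 * (B u + peakDepth u + 4 * (u + 1)) + 1 ≤ blockOctave B (2 * u + 1) := by
  rw [blockOctave_two_mul_add_one, Finset.sum_range_succ]
  have : u * 4 ≤ ∑ v ∈ Finset.range u, (B v + peakDepth v + 4) := by
    simpa using! Finset.card_nsmul_le_sum (Finset.range u) _ 4 fun v _ => Nat.le_add_left 4 _
  omega

variable {u}

lemma blockOctave_add_le {v : ℕ} (hv : v < 2 * u + 1) :
    blockOctave B v + 4 + peakDepth u ≤ blockOctave B (2 * u + 1) := by
  obtain ⟨w, rfl | rfl⟩ := v.even_or_odd'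
  · rw [blockOctave_two_mul]
    have := blockOctave_two_mul_add_one_lower B u
    omega
  · have : ∑ v ∈ Finset.range (w + 1), (B v + peakDepth v + 4) ≤
        ∑ v ∈ Finset.range u, (B v + peakDepth v + 4) :=
      Finset.sum_le_sum_of_subset (Finset.range_mono (by omega))
    rw [blockOctave_two_mul_add_one, blockOctave_two_mul_add_one, Finset.sum_range_succ _ u]
    omega

lemma blockDepth_le_blockOctave (t : ℕ) : blockDepth t ≤ blockOctave B t := by
  obtain ⟨u, rfl | rfl⟩ := t.even_or_odd'
  · simp [blockDepth_two_mul]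
  · have := blockOctave_two_mul_add_one_lower B u
    rw [blockDepth_two_mul_add_one]
    omega

lemma injective_blockOctave : (blockOctave B).Injective := by
  have ne_of_lt {t u : ℕ} (h : t < 2 * u + 1) : blockOctave B t ≠ blockOctave B (2 * u + 1) := by
    have := blockOctave_add_le B h
    omega
  intro t v htv
  obtain ⟨u, rfl | rfl⟩ := t.even_or_odd' <;> obtain ⟨w, rfl | rfl⟩ := v.even_or_odd'
  · simpa only [blockOctave_two_mul] using htv
  · rw [blockOctave_two_mul, blockOctave_two_mul_add_one] at htv
    omega
  · rw [blockOctave_two_mul, blockOctave_two_mul_add_one] at htv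
    omega
  · rcases lt_trichotomy u w with h | rfl | h
    · exact absurd htv (ne_of_lt (by omega))
    · rfl
    · exact absurd htv.symm (ne_of_lt (by omega))

end Parameters

section Growth

variable (u : ℕ)

lemma blockStart_blockDepth_le : blockStart blockDepth (2 * u + 2) ≤
    2 ^ (Nat.log 2 u + 2) * 2 ^ peakDepth u := by
  have blockStart_le (w : ℕ) (hw : w ≤ u + 1) :
      blockStart blockDepth (2 * w) ≤ 2 * w * 2 ^ peakDepth u := by
    induction w with
    | zero => simp [blockStart]
    | succ w ih =>
      rw [show 2 * (w + 1) = 2 * w + 1 + 1 by ring, blockStart_succ, blockStart_succ,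
        blockDepth_two_mul, blockDepth_two_mul_add_one]
      have : 2 ^ peakDepth w ≤ 2 ^ peakDepth u :=
        Nat.pow_le_pow_right two_pos (monotone_peakDepth (by omega))
      nlinarith [ih (by omega), Nat.one_le_two_pow (n := peakDepth u)]
  refine (blockStart_le (u + 1) le_rfl).trans (Nat.mul_le_mul_right _ ?_)
  have := Nat.lt_pow_succ_log_self one_lt_two u
  rw [pow_succ] at this ⊢
  omega

lemma blockStart_blockDepth_div_sq_le :
    (blockStart blockDepth (2 * u + 2) : ℝ) / (2 ^ peakDepth u) ^ 2 ≤ 8 / (Nat.log 2 u + 1) := by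
  have start_le : (blockStart blockDepth (2 * u + 2) : ℝ) ≤
      2 ^ (Nat.log 2 u + 2) * 2 ^ peakDepth u := by
    exact_mod_cast blockStart_blockDepth_le u
  have le_length : (2 : ℝ) ^ Nat.log 2 u * (Nat.log 2 u + 1) ≤ 2 * 2 ^ peakDepth u := by
    exact_mod_cast two_pow_mul_log_add_one_le_two_mul_two_pow_peakDepth u
  rw [div_le_div_iff₀ (by positivity) (by positivity)]
  calc (blockStart blockDepth (2 * u + 2) : ℝ) * (Nat.log 2 u + 1)
      ≤ 2 ^ (Nat.log 2 u + 2) * 2 ^ peakDepth u * (Nat.log 2 u + 1) := by gcongr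
    _ = 4 * 2 ^ peakDepth u * (2 ^ Nat.log 2 u * (Nat.log 2 u + 1)) := by ring
    _ ≤ 4 * 2 ^ peakDepth u * (2 * 2 ^ peakDepth u) := by gcongr
    _ = 8 * (2 ^ peakDepth u) ^ 2 := by ring

lemma log_blockStart_blockDepth_le :
    log (blockStart blockDepth (2 * u + 2)) ≤ 3 * (Nat.log 2 u + 1) := by
  set a := Nat.log 2 u
  have start_le : blockStart blockDepth (2 * u + 2) ≤ 2 ^ (3 * (a + 1)) := calc
    blockStart blockDepth (2 * u + 2) ≤ 2 ^ (a + 2) * 2 ^ peakDepth u := blockStart_blockDepth_le u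
    _ ≤ 2 ^ (a + 2) * (2 ^ a * (a + 1)) := by gcongr; exact two_pow_peakDepth_le u
    _ ≤ 2 ^ (a + 2) * (2 ^ a * 2 ^ (a + 1)) := by
      gcongr
      exact Nat.lt_two_pow_self.le
    _ = 2 ^ (3 * (a + 1)) := by ring
  have start_pos : 0 < blockStart blockDepth (2 * u + 2) :=
    (Nat.zero_le _).trans_lt (strictMono_blockStart _ (by omega : 0 < 2 * u + 2))
  calc log (blockStart blockDepth (2 * u + 2)) ≤ log (2 ^ (3 * (a + 1))) :=
        log_le_log (by exact_mod_cast start_pos) (by exact_mod_cast start_le)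
    _ = 3 * (a + 1) * log 2 := by
      rw [log_pow]
      push_cast
      ring
    _ ≤ 3 * (a + 1) := mul_le_of_le_one_right (by positivity) (by linarith [log_two_lt_d9])

lemma tendsto_natLog_two_add_one_atTop :
    Tendsto (fun u : ℕ => ((Nat.log 2 u : ℝ) + 1)) atTop atTop :=
  tendsto_atTop_add_const_right _ _ <| tendsto_natCast_atTop_atTop.comp <|
    tendsto_atTop.2 fun b => (eventually_ge_atTop (2 ^ b)).mono fun _ hu =>
      Nat.le_log_of_pow_le one_lt_two hu

lemma tendsto_blockStart_blockDepth_div_sq : Tendsto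
    (fun u => (blockStart blockDepth (2 * u + 2) : ℝ) / (2 ^ peakDepth u) ^ 2) atTop (𝓝 0) :=
  squeeze_zero (fun u => by positivity) blockStart_blockDepth_div_sq_le
    (tendsto_natLog_two_add_one_atTop.const_div_atTop 8)

lemma two_mul_blockStart_mul_log_log_div_sq_le :
    2 * blockStart blockDepth (2 * u + 2) * log (log (blockStart blockDepth (2 * u + 2))) /
        (2 ^ peakDepth u) ^ 2 ≤
      48 * (log (3 * (Nat.log 2 u + 1)) / (3 * (Nat.log 2 u + 1))) := by
  set N := blockStart blockDepth (2 * u + 2)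
  set y : ℝ := 3 * (Nat.log 2 u + 1) with hy
  have one_le_y : 1 ≤ y := by
    rw [hy]
    linarith [(Nat.log 2 u).cast_nonneg (α := ℝ)]
  have log_N_pos : 0 < log N := by
    refine log_pos ?_
    have : 2 * u + 2 ≤ N := (strictMono_blockStart _).le_apply
    exact_mod_cast (by omega : 1 < N)
  have div_sq_le : (N : ℝ) / (2 ^ peakDepth u) ^ 2 ≤ 24 / y :=
    (blockStart_blockDepth_div_sq_le u).trans_eq (by rw [hy]; field_simp; norm_num)
  calc 2 * N * log (log N) / (2 ^ peakDepth u) ^ 2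
      = 2 * (N / (2 ^ peakDepth u) ^ 2) * log (log N) := by ring
    _ ≤ 2 * (N / (2 ^ peakDepth u) ^ 2) * log y := by
        gcongr
        exact log_blockStart_blockDepth_le u
    _ ≤ 2 * (24 / y) * log y := by
        gcongr
        exact log_nonneg one_le_y
    _ = 48 * (log y / y) := by ring

lemma tendsto_sqrt_log_log_blockStart_div : Tendsto
    (fun u => √(2 * blockStart blockDepth (2 * u + 2) *
      log (log (blockStart blockDepth (2 * u + 2)))) / 2 ^ peakDepth u) atTop (𝓝 0) := by
  have bound : Tendsto
      (fun u : ℕ => √(48 * (log (3 * (Nat.log 2 u + 1)) / (3 * (Nat.log 2 u + 1))))) atTop (𝓝 0) :=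
    (Real.continuous_sqrt.tendsto' (48 * 0) 0 (by simp)).comp
      ((Real.isLittleO_log_id_atTop.tendsto_div_nhds_zero.comp
        (tendsto_natLog_two_add_one_atTop.const_mul_atTop (zero_lt_three' ℝ))).const_mul 48)
  refine squeeze_zero (fun u => by positivity) (fun u => ?_) bound
  rw [← sqrt_sq (by positivity : (0 : ℝ) ≤ 2 ^ peakDepth u), ← sqrt_div' _ (by positivity)]
  exact sqrt_le_sqrt (two_mul_blockStart_mul_log_log_div_sq_le u)

end Growth

section GapCondition

lemma range_four_pow_subset_range_blockFreq (B : ℕ → ℕ) :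
    Set.range (fun v => 4 ^ v) ⊆ Set.range (blockFreq (blockOctave B) blockDepth) := by
  rintro _ ⟨v, rfl⟩
  refine ⟨blockStart blockDepth (2 * v) + 0, ?_⟩
  rw [blockFreq_blockStart_add _ (by positivity)]
  simp [blockDepth_two_mul, blockOctave_two_mul, pow_mul]

/-- `B u` is chosen beyond the indices `k` for which `ε k` exceeds the relative spacing of the
`u`-th long block. Because of the powers of `4` below this block, its terms have indices at least
`B u`. -/
theorem exists_forall_one_add_mul_le_succ {ε : ℕ → ℝ} (hε_nonneg : ∀ k, 0 ≤ ε k)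
    (hε_lim : Tendsto ε atTop (𝓝 0)) :
    ∃ (B : ℕ → ℕ) (k₀ : ℕ), ∀ n : ℕ → ℕ, StrictMono n →
      Set.range n = Set.range (blockFreq (blockOctave B) blockDepth) →
        ∀ k ≥ k₀, (1 + ε k) * n k ≤ n (k + 1) := by
  have eventually_le (δ : ℝ) (hδ : 0 < δ) : ∃ K, ∀ k ≥ K, ε k ≤ δ :=
    eventually_atTop.1 (hε_lim.eventually_le_const hδ)
  choose B hB using fun u => eventually_le ((2 ^ (peakDepth u + 1))⁻¹) (by positivity)
  obtain ⟨k₀, hk₀⟩ := eventually_le 2⁻¹ (by positivity)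
  refine ⟨B, k₀, fun n hn hrange k hk => ?_⟩
  have hdc := blockDepth_le_blockOctave B
  have mem (k) : n k ∈ Set.range (blockFreq (blockOctave B) blockDepth) :=
    hrange ▸ Set.mem_range_self k
  obtain ⟨N, hN⟩ := mem k
  obtain ⟨N', hN'⟩ := mem (k + 1)
  obtain ⟨t, j, hj, rfl⟩ := exists_blockStart_add_eq blockDepth N
  rw [← hN, ← hN']
  refine one_add_mul_blockFreq_le_of_lt (injective_blockOctave B) hdc hj
    (hN.trans_lt ((hn k.lt_succ_self).trans_eq hN'.symm)) (hε_nonneg k) ?_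
  rw [← le_div_iff₀ (by positivity), one_div]
  obtain ⟨u, rfl | rfl⟩ := t.even_or_odd'
  · simpa [blockDepth_two_mul] using hk₀ k hk
  · have four_pow_le : 4 ^ B u ≤ n k := calc
      4 ^ B u = 2 ^ (2 * B u) := by norm_num [pow_mul]
      _ ≤ 2 ^ blockOctave B (2 * u + 1) :=
        Nat.pow_le_pow_right two_pos (by linarith [blockOctave_two_mul_add_one_lower B u])
      _ ≤ n k := (two_pow_le_blockFreq (hdc _) hj).trans_eq hN
    rw [blockDepth_two_mul_add_one]
    exact hB u k (le_of_strictMono_of_range_subset (pow_right_strictMono₀ (by norm_num)) hn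
      (hrange ▸ range_four_pow_subset_range_blockFreq B) four_pow_le)

end GapCondition

section Limsup

lemma limsup_coe_div_coe_eq_top {a b r : ℕ → ℝ} {N : ℕ → ℕ} (hN : Tendsto N atTop atTop)
    (hb : ∀ᶠ k in atTop, 0 < b k) (hr : ∀ u, 0 < r u)
    (hbr : Tendsto (fun u => b (N u) / r u) atTop (𝓝 0)) (har : ∃ᶠ u in atTop, r u ≤ a (N u)) :
    limsup (fun k => (a k : EReal) / (b k : EReal)) atTop = ⊤ := by
  refine EReal.eq_top_iff_forall_lt _ |>.2 fun y => ?_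
  have hK : (0 : ℝ) < |y| + 1 := by positivity
  refine (EReal.coe_lt_coe_iff.2 ((le_abs_self y).trans_lt (lt_add_one _))).trans_le
    (le_limsup_of_frequently_le' (hN.frequently ?_))
  have small := hbr.eventually_le_const (inv_pos.2 hK)
  refine (har.and_eventually (small.and (hN.eventually hb))).mono fun u ⟨hra, hbr, hb⟩ => ?_
  rw [← EReal.coe_div, EReal.coe_le_coe_iff, le_div_iff₀ hb]
  rw [div_le_iff₀ (hr u), le_inv_mul_iff₀ hK] at hbr
  exact hbr.trans hra

lemma eventually_sqrt_log_log_pos :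
    ∀ᶠ N : ℕ in atTop, 0 < √(2 * N * log (log N)) := by
  have := (tendsto_log_atTop.comp tendsto_log_atTop).comp (tendsto_natCast_atTop_atTop (R := ℝ))
  filter_upwards [this.eventually_gt_atTop 0, eventually_gt_atTop 0] with N hlog hN
  exact sqrt_pos.2 (mul_pos (by positivity) hlog)

theorem ae_limsup_cosSum_div_sqrt_log_log_eq_top (B : ℕ → ℕ) :
    ∀ᵐ x ∂volume.restrict (Set.Ioo (0 : ℝ) 1),
      limsup (fun N : ℕ => (cosSum (blockFreq (blockOctave B) blockDepth) N x : EReal) /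
        (√(2 * N * log (log N)) : EReal)) atTop = ⊤ := by
  have N_tendsto : Tendsto (fun u => blockStart blockDepth (2 * u + 2)) atTop atTop :=
    (strictMono_blockStart _).tendsto_atTop.comp
      (strictMono_nat_of_lt_succ fun u => by omega : StrictMono fun u => 2 * u + 2).tendsto_atTop
  have peaks := ae_frequently_quarter_le_cosSum (τ := fun u => 2 * u + 1)
    (strictMono_nat_of_lt_succ fun u => by omega) (injective_blockOctave B)
    (blockDepth_le_blockOctave B)
    (fun u v hv => by simpa only [blockDepth_two_mul_add_one] using blockOctave_add_le B hv)
    (by simpa only [blockDepth_two_mul_add_one] using not_summable_one_div_two_pow_peakDepth)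
    (by
      refine squeeze_zero (fun u => by positivity) (fun u => ?_)
        tendsto_blockStart_blockDepth_div_sq
      rw [blockDepth_two_mul_add_one]
      gcongr
      exact (strictMono_blockStart _).monotone (Nat.le_succ _))
  filter_upwards [peaks] with x hx
  refine limsup_coe_div_coe_eq_top (r := fun u => 2 ^ peakDepth u / 4) N_tendsto
    eventually_sqrt_log_log_pos (fun u => by positivity) ?_
    (by simpa only [blockDepth_two_mul_add_one] using hx)
  simpa [div_div_eq_mul_div, mul_div_right_comm] using
    tendsto_sqrt_log_log_blockStart_div.mul_const 4

end Limsup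

/-- Theorem `counterex`, LIL part: for any positive `ε_k → 0` there are a sequence `(n_k)` of
positive integers with `n_{k+1}/n_k ≥ 1 + ε_k` for `k ≥ k₀` and a permutation `σ` of the
positive integers such that `limsup_N (∑_{k≤N} cos(2π n_{σ(k)} x)) / √(2N log log N) = +∞`
for Lebesgue-almost every `x ∈ (0,1)`. -/
theorem statement1
    (ε : ℕ → ℝ) (hε_pos : ∀ k, 0 < ε k) (hε_lim : Tendsto ε atTop (𝓝 0)) :
    ∃ (n : ℕ → ℕ) (k₀ : ℕ) (σ : Equiv.Perm ℕ),
      (∀ k, 0 < n k) ∧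
      (∀ k, k₀ ≤ k → (1 + ε k) * (n k : ℝ) ≤ (n (k + 1) : ℝ)) ∧
      (∀ᵐ x ∂(volume.restrict (Set.Ioo (0:ℝ) 1)),
        Filter.limsup (fun N : ℕ =>
            (((∑ k ∈ Finset.range N, Real.cos (2 * π * (n (σ k)) * x)) /
              Real.sqrt (2 * N * Real.log (Real.log N))) : EReal)) atTop = ⊤) := by
  obtain ⟨B, k₀, hgap⟩ := exists_forall_one_add_mul_le_succ (fun k => (hε_pos k).le) hε_lim
  set ν := blockFreq (blockOctave B) blockDepth
  have ν_injective : ν.Injective :=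
    injective_blockFreq (injective_blockOctave B) (blockDepth_le_blockOctave B)
  obtain ⟨n, σ, hn, hrange, hσ⟩ := exists_strictMono_comp_perm_eq ν_injective
  refine ⟨n, k₀, σ, fun k => ?_, hgap n hn hrange, ?_⟩
  · obtain ⟨N, hN⟩ : n k ∈ Set.range ν := hrange ▸ Set.mem_range_self k
    exact hN ▸ blockFreq_pos _ _ N
  · have n_apply (k : ℕ) : n (σ k) = ν k := congrFun hσ k
    simpa only [n_apply] using! ae_limsup_cosSum_div_sqrt_log_log_eq_top B
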